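/- arXiv:1810.12433 — 2 statements merged into one kernel-verified Lean document; each statement's English description precedes it below -/
import Mathlib

section
/- For every 0 < ε < 1 there exists C > 0 such that, for p ≥ C log n / n, the binomial random graph G = G_{n,p} asymptotically almost surely satisfies: for every H ∈ H^{ε,ε}_{n,p}(G), the graph G' := G ∖ H is connected. -/
/-!
If `G \ H` is disconnected, there is a set `A` of `1 ≤ a ≤ n / 2` vertices such that `H` contains
every edge of `G` between `A` and its complement. This contradicts the degree condition on `H`,
using only lower bounds on numbers of edges of `G` between disjoint sets. Put `δ = ε / 8`.

* If `a ≤ 2δn`, then `e_G(A, Aᶜ) ≥ (1 - δ) a (n - a) p` gives a vertex of `A` whose `H`-degree is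
  larger than `(1 - ε) n p`, against the condition at `i = 1`, whose second alternative would force
  a negative degree.
* If `a > 2δn`, the bound `e_G(X, Y) ≥ (1 - δ) |X| |Y| p` for disjoint `X`, `Y` of size at least
  `δn` shows that all but fewer than `δn` vertices of `A` have `H`-degree at least
  `(1 - δ)(n - a)p`, and all but fewer than `δn` vertices of `Aᶜ` have `H`-degree at least
  `(1 - δ) a p`. Both alternatives of the condition fail at `i = a - ⌊δn⌋`
  (`connected_of_crossEdges`).

A Chernoff bound (`Pr_crossEdges_lt`) and a union bound show that both kinds of edge bounds hold
with probability at least `1 - 3 / n` when `p ≥ (16 / δ ^ 4) log n / n`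
(`Pr_bad_cut_le`, `Pr_bad_pair_le`).
-/


open Filter Real

namespace Resilience

variable {V : Type*}

/-- The degree of a vertex, as the cardinality of its neighbourhood. -/
noncomputable def deg (G : SimpleGraph V) (v : V) : ℕ := (G.neighborSet v).ncard

/-- The neighbourhood of a set of vertices: all vertices with a neighbour in `X`. -/
def nbhd (G : SimpleGraph V) (X : Set V) : Set V := {v | ∃ x ∈ X, G.Adj v x}

/-- The minimum degree over a set of vertices. -/
noncomputable def minDeg (G : SimpleGraph V) (X : Set V) : ℕ :=
  sInf ((fun v => deg G v) '' X)

/-- The number of edges of `G` with one endpoint in `X` and the other in `Y`. -/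
noncomputable def eBetween (G : SimpleGraph V) (X Y : Set V) : ℕ :=
  {e ∈ G.edgeSet | ∃ x ∈ X, ∃ y ∈ Y, e = s(x, y)}.ncard

/-- The number of edges of `G` with both endpoints in `A`. -/
noncomputable def eIn (G : SimpleGraph V) (A : Set V) : ℕ :=
  {e ∈ G.edgeSet | ∀ v ∈ e, v ∈ A}.ncard

/-- The graph on `V` whose edges are the consecutive pairs of the list `l`;
this lets us view a path, recorded as a list of distinct vertices, as a graph. -/
def listGraph (l : List V) : SimpleGraph V :=
  SimpleGraph.fromEdgeSet {e | ∃ q ∈ l.zip l.tail, e = s(q.1, q.2)}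

/-- `l` is a (nonempty) path on `V` all of whose edges lie in `G`. -/
def IsPathOn (G : SimpleGraph V) (l : List V) : Prop :=
  l ≠ [] ∧ l.Nodup ∧ l.Chain' G.Adj

/-- `l` is a longest path with all edges in `G`. -/
def IsLongestPathOn (G : SimpleGraph V) (l : List V) : Prop :=
  IsPathOn G l ∧ ∀ l' : List V, IsPathOn G l' → l'.length ≤ l.length

/-- `l'` is obtained from the path `l` (with fixed last endpoint) by a single rotation
within `G`, whose broken edge lies on the original path `P`.  Writing
`l = a :: t₁ ++ c :: b :: t₂`, the pivot is `b`, the new edge is `ab ∈ G`, the broken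
edge is `cb` (an edge of `P`), and the rotated path is `(a :: t₁ ++ [c]).reverse ++ b :: t₂`. -/
def IsRotation (G : SimpleGraph V) (P l l' : List V) : Prop :=
  ∃ (a c b : V) (t₁ t₂ : List V),
    l = a :: t₁ ++ c :: b :: t₂ ∧ G.Adj a b ∧ (listGraph P).Adj c b ∧
    l' = (a :: t₁ ++ [c]).reverse ++ b :: t₂

/-- The set of paths obtainable from `P` by at most `t` successive rotations within `G`
with fixed last endpoint, all broken edges lying on `P`. -/
def rotSet (G : SimpleGraph V) (P : List V) : ℕ → Set (List V)
  | 0 => {P}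
  | t + 1 => rotSet G P t ∪ {l' | ∃ l ∈ rotSet G P t, IsRotation G P l l'}

/-- `R^t_{G,P,u}`: the set of endpoints of paths obtainable from `P` by at most `t`
successive rotations within `G` with fixed last endpoint. -/
def Rset (G : SimpleGraph V) (P : List V) (t : ℕ) : Set V :=
  {x | ∃ l ∈ rotSet G P t, l.head? = some x}

/-- The family `H^ε_{n,p}` of Pósa-type subgraphs: there is an ordering of the vertices
with non-increasing degrees such that `d_H(v_i) ≤ (n-i)p - εnp` for all `i < n/2`
(1-based indexing). -/
def PosaFamily (n : ℕ) (p ε : ℝ) (H : SimpleGraph (Fin n)) : Prop :=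
  ∃ v : Fin n → Fin n, Function.Bijective v ∧
    (∀ i j : Fin n, i ≤ j → deg H (v j) ≤ deg H (v i)) ∧
    ∀ i : Fin n, ((i.1 : ℝ) + 1) < n / 2 →
      (deg H (v i) : ℝ) ≤ ((n : ℝ) - ((i.1 : ℝ) + 1)) * p - ε * n * p

/-- The family `H^{ε,δ}_{n,p}` of (shifted) Chvátal-type subgraphs, where the shift
`δn` is recorded as a natural number `s`: there is an ordering of the vertices with
non-increasing degrees such that for all `i < n/2` (1-based indexing), either
`d_H(v_i) ≤ (n-i)p - εnp` or `d_H(v_{n-i-s}) ≤ ip - εnp`. -/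
def ChvatalFamily (n : ℕ) (p ε : ℝ) (s : ℕ) (H : SimpleGraph (Fin n)) : Prop :=
  ∃ v : Fin n → Fin n, Function.Bijective v ∧
    (∀ i j : Fin n, i ≤ j → deg H (v j) ≤ deg H (v i)) ∧
    ∀ i : Fin n, ((i.1 : ℝ) + 1) < n / 2 →
      ((deg H (v i) : ℝ) ≤ ((n : ℝ) - ((i.1 : ℝ) + 1)) * p - ε * n * p ∨
       (deg H (v ⟨n - (i.1 + 1) - s - 1, by have := i.2; omega⟩) : ℝ) ≤
         ((i.1 : ℝ) + 1) * p - ε * n * p)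

/-- The probability weight of a fixed graph `G` in the binomial random graph `G_{n,p}`. -/
noncomputable def weight (n : ℕ) (p : ℝ) (G : SimpleGraph (Fin n)) : ℝ :=
  p ^ G.edgeSet.ncard * (1 - p) ^ (n.choose 2 - G.edgeSet.ncard)

open Classical in
/-- The probability that the binomial random graph `G_{n,p}` satisfies the property `Q`. -/
noncomputable def Pr (n : ℕ) (p : ℝ) (Q : SimpleGraph (Fin n) → Prop) : ℝ :=
  ∑ G : SimpleGraph (Fin n), if Q G then weight n p G else 0

/-- Property `RE(δ)` for a (connected) graph `G` on `n` vertices: for every path `P`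
on the vertex set, either `G ∪ P` has a longer path, or there are at least `δn` vertices
`v`, each with a set `T v` of at least `δn` vertices `w`, such that `G ∪ P` has a path
from `v` to `w` with the same vertex set as `P`. -/
def RE (n : ℕ) (δ : ℝ) (G : SimpleGraph (Fin n)) : Prop :=
  G.Connected ∧
  ∀ P : List (Fin n), P ≠ [] → P.Nodup →
    (∃ Q : List (Fin n), IsPathOn (G ⊔ listGraph P) Q ∧ P.length < Q.length) ∨
    (∃ S : Set (Fin n), δ * n ≤ S.ncard ∧
      ∃ T : Fin n → Set (Fin n), (∀ v ∈ S, δ * n ≤ (T v).ncard) ∧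
        ∀ v ∈ S, ∀ w ∈ T v, ∃ Q : List (Fin n),
          IsPathOn (G ⊔ listGraph P) Q ∧ Q.head? = some v ∧ Q.getLast? = some w ∧
          Q.toFinset = P.toFinset)

/-- `G₂` complements `G₁` (with respect to parameter `δ` as in `RE(δ)`): for every path
`P` on the vertex set, either `G₁ ∪ P` has a longer path, or there are sets `S`, `T v`
as in the definition of `RE(δ)` together with `v ∈ S` and `w ∈ T v` such that `vw` is an
edge of `G₁ ∪ G₂`. -/
def Complements (n : ℕ) (δ : ℝ) (G₁ G₂ : SimpleGraph (Fin n)) : Prop :=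
  ∀ P : List (Fin n), P ≠ [] → P.Nodup →
    (∃ Q : List (Fin n), IsPathOn (G₁ ⊔ listGraph P) Q ∧ P.length < Q.length) ∨
    (∃ S : Set (Fin n), δ * n ≤ S.ncard ∧
      ∃ T : Fin n → Set (Fin n), (∀ v ∈ S, δ * n ≤ (T v).ncard) ∧
        (∀ v ∈ S, ∀ w ∈ T v, ∃ Q : List (Fin n),
          IsPathOn (G₁ ⊔ listGraph P) Q ∧ Q.head? = some v ∧ Q.getLast? = some w ∧
          Q.toFinset = P.toFinset) ∧
        ∃ v ∈ S, ∃ w ∈ T v, (G₁ ⊔ G₂).Adj v w)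


/-! ### The binomial random graph -/

open Classical in
/-- The generating function of the number of edges of `G_{n,p}` in a fixed set `S` of pairs. -/
lemma sum_weight_mul_pow (n : ℕ) (p x : ℝ) (S : Finset (Sym2 (Fin n)))
    (hS : S ⊆ (⊤ : SimpleGraph (Fin n)).edgeFinset) :
    ∑ G : SimpleGraph (Fin n), weight n p G * x ^ (G.edgeFinset ∩ S).card =
      (p * x + (1 - p)) ^ S.card := by
  set E := (⊤ : SimpleGraph (Fin n)).edgeFinset with hE
  have hEc : E.card = n.choose 2 := by
    rw [hE, SimpleGraph.card_edgeFinset_top_eq_card_choose_two, Fintype.card_fin]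
  have hprod : (p * x + (1 - p)) ^ S.card =
      ∏ e ∈ E, ((if e ∈ S then p * x else p) + (1 - p)) := by
    rw [← Finset.prod_sdiff hS, Finset.prod_eq_one, one_mul, ← Finset.prod_const]
    · exact Finset.prod_congr rfl fun e he => by simp [he]
    · intro e he
      simp [(Finset.mem_sdiff.1 he).2]
  rw [hprod, Finset.prod_add]
  refine Finset.sum_nbij' (fun G => G.edgeFinset)
    (fun F => SimpleGraph.fromEdgeSet (F : Set (Sym2 (Fin n)))) ?_ ?_ ?_ ?_ ?_
  · intro G _
    exact Finset.mem_powerset.2 (SimpleGraph.edgeFinset_mono le_top)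
  · intro F _
    simp
  · intro G _
    simp
  · intro F hF
    have hF' := Finset.mem_powerset.1 hF
    ext e
    simp only [SimpleGraph.mem_edgeFinset, SimpleGraph.edgeSet_fromEdgeSet, Set.mem_sdiff,
      Finset.mem_coe]
    refine ⟨fun h => h.1, fun h => ⟨h, ?_⟩⟩
    have := hF' h
    simpa [hE] using this
  · intro G _
    have hG : G.edgeFinset ⊆ E := SimpleGraph.edgeFinset_mono le_top
    have hc : G.edgeSet.ncard = G.edgeFinset.card := by
      rw [← SimpleGraph.coe_edgeFinset, Set.ncard_coe_finset]
    rw [weight, hc, Finset.prod_const, Finset.card_sdiff_of_subset hG, hEc]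
    have : ∏ e ∈ G.edgeFinset, (if e ∈ S then p * x else p) =
        p ^ G.edgeFinset.card * x ^ (G.edgeFinset ∩ S).card := by
      rw [← Finset.prod_const p, ← Finset.filter_mem_eq_inter, ← Finset.prod_const x,
        Finset.prod_filter, ← Finset.prod_mul_distrib]
      exact Finset.prod_congr rfl fun e _ => by split_ifs <;> simp
    rw [this]
    ring

lemma weight_nonneg {n : ℕ} {p : ℝ} (hp : 0 ≤ p) (hp1 : p ≤ 1) (G : SimpleGraph (Fin n)) :
    0 ≤ weight n p G :=
  mul_nonneg (pow_nonneg hp _) (pow_nonneg (sub_nonneg.2 hp1) _)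

lemma sum_weight (n : ℕ) (p : ℝ) : ∑ G : SimpleGraph (Fin n), weight n p G = 1 := by
  classical
  simpa using sum_weight_mul_pow n p 1 ∅ (Finset.empty_subset _)

lemma Pr_add_Pr_not (n : ℕ) (p : ℝ) (Q : SimpleGraph (Fin n) → Prop) :
    Pr n p Q + Pr n p (fun G => ¬ Q G) = 1 := by
  classical
  rw [← sum_weight n p, Pr, Pr, ← Finset.sum_add_distrib]
  exact Finset.sum_congr rfl fun G _ => by by_cases h : Q G <;> simp [h]

lemma Pr_mono {n : ℕ} {p : ℝ} (hp : 0 ≤ p) (hp1 : p ≤ 1) {Q R : SimpleGraph (Fin n) → Prop}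
    (h : ∀ G, Q G → R G) : Pr n p Q ≤ Pr n p R := by
  classical
  refine Finset.sum_le_sum fun G _ => ?_
  have := weight_nonneg hp hp1 G
  by_cases hQ : Q G
  · simp [hQ, h G hQ]
  · by_cases hR : R G <;> simp [hQ, hR, this]

lemma Pr_or_le {n : ℕ} {p : ℝ} (hp : 0 ≤ p) (hp1 : p ≤ 1) (Q R : SimpleGraph (Fin n) → Prop) :
    Pr n p (fun G => Q G ∨ R G) ≤ Pr n p Q + Pr n p R := by
  classical
  rw [Pr, Pr, Pr, ← Finset.sum_add_distrib]
  refine Finset.sum_le_sum fun G _ => ?_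
  have := weight_nonneg hp hp1 G
  by_cases hQ : Q G <;> by_cases hR : R G <;> simp [hQ, hR, this]

lemma Pr_exists_le {n : ℕ} {p : ℝ} (hp : 0 ≤ p) (hp1 : p ≤ 1) {ι : Type*} (I : Finset ι)
    (Q : ι → SimpleGraph (Fin n) → Prop) :
    Pr n p (fun G => ∃ i ∈ I, Q i G) ≤ ∑ i ∈ I, Pr n p (Q i) := by
  classical
  induction I using Finset.induction_on with
  | empty => simp [Pr]
  | insert a s ha ih =>
    rw [Finset.sum_insert ha]
    refine le_trans ?_ (add_le_add_right ih _)
    refine le_trans (le_of_eq ?_) (Pr_or_le hp hp1 _ _)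
    simp

/-! ### Edges between two sets -/

open Classical in
/-- The number of edges of `G` among the pairs `s(x, y)` with `x ∈ X` and `y ∈ Y`. -/
noncomputable def crossEdges {n : ℕ} (G : SimpleGraph (Fin n)) (X Y : Finset (Fin n)) : ℕ :=
  (G.edgeFinset ∩ (X ×ˢ Y).image fun q => s(q.1, q.2)).card

/-- Chernoff's lower tail bound for the number of edges between two disjoint sets, from
Markov's inequality for `exp (-(δ / 2) * e(X, Y))`. -/
lemma Pr_crossEdges_lt {n : ℕ} {p δ : ℝ} (hp : 0 ≤ p) (hp1 : p ≤ 1) (hδ : 0 ≤ δ) (hδ1 : δ ≤ 1)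
    (X Y : Finset (Fin n)) (hXY : Disjoint X Y) :
    Pr n p (fun G => (crossEdges G X Y : ℝ) < (1 - δ) * X.card * Y.card * p) ≤
      exp (-(δ ^ 2 * X.card * Y.card * p / 4)) := by
  classical
  set S : Finset (Sym2 (Fin n)) := (X ×ˢ Y).image fun q => s(q.1, q.2) with hSdef
  have hne : ∀ a ∈ X, ∀ b ∈ Y, a ≠ b := fun a ha b hb h =>
    (Finset.disjoint_left.1 hXY ha) (h ▸ hb)
  have hcard : S.card = X.card * Y.card := by
    rw [hSdef, Finset.card_image_of_injOn, Finset.card_product]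
    rintro ⟨a, b⟩ hab ⟨c, d⟩ hcd h
    simp only [Finset.coe_product, Set.mem_prod, Finset.mem_coe] at hab hcd
    rcases Sym2.eq_iff.1 h with h | h
    · exact Prod.ext h.1 h.2
    · exact absurd h.1 (hne _ hab.1 _ hcd.2)
  have hS : S ⊆ (⊤ : SimpleGraph (Fin n)).edgeFinset := by
    intro e he
    obtain ⟨⟨a, b⟩, hab, rfl⟩ := Finset.mem_image.1 he
    rw [Finset.mem_product] at hab
    simpa using hne _ hab.1 _ hab.2
  set t := δ / 2 with ht
  set m := (1 - δ) * X.card * Y.card * p with hm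
  have hmgf := sum_weight_mul_pow n p (exp (-t)) S hS
  have h1 : Pr n p (fun G => (crossEdges G X Y : ℝ) < m) ≤
      exp (t * m) * (p * exp (-t) + (1 - p)) ^ S.card := by
    rw [← hmgf, Finset.mul_sum, Pr]
    refine Finset.sum_le_sum fun G _ => ?_
    have hw := weight_nonneg hp hp1 G
    split_ifs with h
    · have : 1 ≤ exp (t * m) * exp (-t) ^ (G.edgeFinset ∩ S).card := by
        rw [← Real.exp_nat_mul, ← Real.exp_add, Real.one_le_exp_iff]
        have h' : ((G.edgeFinset ∩ S).card : ℝ) < m := by simpa [crossEdges, hSdef] using h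
        nlinarith
      nlinarith
    · positivity
  have h2 : exp (-t) ≤ 1 - t + t ^ 2 := by
    have := (abs_le.1 (Real.abs_exp_sub_one_sub_id_le (x := -t)
      (by rw [abs_neg, abs_of_nonneg (by positivity)]; linarith))).2
    linarith
  have h3 : p * exp (-t) + (1 - p) ≤ exp (-(p * (t - t ^ 2))) := by
    have := Real.add_one_le_exp (-(p * (t - t ^ 2)))
    nlinarith
  have h4 : 0 ≤ p * exp (-t) + (1 - p) := by
    have := Real.exp_pos (-t)
    nlinarith [mul_nonneg hp this.le]
  calc _ ≤ exp (t * m) * (p * exp (-t) + (1 - p)) ^ S.card := h1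
    _ ≤ exp (t * m) * exp (-(p * (t - t ^ 2))) ^ S.card := by gcongr
    _ = exp (-(δ ^ 2 * X.card * Y.card * p / 4)) := by
      rw [← Real.exp_nat_mul, ← Real.exp_add, hcard, hm, ht]
      push_cast
      congr 1
      ring

/-! ### The deterministic argument -/

open Classical in
lemma crossEdges_le_sum {n : ℕ} (G : SimpleGraph (Fin n)) (X Y : Finset (Fin n)) :
    crossEdges G X Y ≤ ∑ x ∈ X, (Y.filter (G.Adj x)).card := by
  have hsub : (G.edgeFinset ∩ (X ×ˢ Y).image fun q => s(q.1, q.2)) ⊆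
      X.biUnion fun x => (Y.filter (G.Adj x)).image fun y => s(x, y) := by
    intro e he
    obtain ⟨he1, he2⟩ := Finset.mem_inter.1 he
    obtain ⟨⟨a, b⟩, hab, rfl⟩ := Finset.mem_image.1 he2
    rw [Finset.mem_product] at hab
    refine Finset.mem_biUnion.2 ⟨a, hab.1, Finset.mem_image.2 ⟨b, ?_, rfl⟩⟩
    exact Finset.mem_filter.2 ⟨hab.2, by simpa using he1⟩
  refine (Finset.card_le_card hsub).trans (Finset.card_biUnion_le.trans ?_)
  exact Finset.sum_le_sum fun x _ => Finset.card_image_le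

/-- Averaging: if `G` has at least `|X| d` edges between `X` and `Y`, all of which lie in `H`, then
some vertex of `X` has `H`-degree at least `d`. -/
lemma exists_le_of_le_crossEdges {n : ℕ} {G H : SimpleGraph (Fin n)} {X Y : Finset (Fin n)}
    (hX : X.Nonempty) (hGH : ∀ x ∈ X, ∀ y ∈ Y, G.Adj x y → H.Adj x y) {d : ℝ}
    (h : X.card * d ≤ crossEdges G X Y) : ∃ x ∈ X, d ≤ deg H x := by
  classical
  by_contra! hcon
  have hdeg : ∀ x ∈ X, ((Y.filter (G.Adj x)).card : ℝ) < d := by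
    intro x hx
    refine lt_of_le_of_lt ?_ (hcon x hx)
    rw [deg, ← Set.ncard_coe_finset]
    refine Nat.cast_le.2 (Set.ncard_le_ncard (fun y hy => ?_) (Set.toFinite _))
    have := Finset.mem_filter.1 (Finset.mem_coe.1 hy)
    exact hGH x hx y this.1 this.2
  have h1 : (crossEdges G X Y : ℝ) ≤ ∑ x ∈ X, ((Y.filter (G.Adj x)).card : ℝ) := by
    exact_mod_cast crossEdges_le_sum G X Y
  have h2 := Finset.sum_lt_sum_of_nonempty hX hdeg
  rw [Finset.sum_const, nsmul_eq_mul] at h2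
  linarith

/-- If at least `k + 1` vertices have degree at least `d`, so does the vertex in position `k`
(counting from `0`) of any ordering by non-increasing degree. -/
lemma le_deg_of_card {n : ℕ} {H : SimpleGraph (Fin n)} {v : Fin n → Fin n}
    (hv : Function.Bijective v) (hmono : ∀ i j : Fin n, i ≤ j → deg H (v j) ≤ deg H (v i))
    {d : ℝ} {B : Finset (Fin n)} (hB : ∀ x ∈ B, d ≤ deg H x) {k : Fin n} (hk : k.1 < B.card) :
    d ≤ deg H (v k) := by
  classical
  by_contra! hcon
  have hsub : B ⊆ (Finset.Iio k).image v := by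
    intro x hx
    obtain ⟨j, rfl⟩ := hv.2 x
    refine Finset.mem_image_of_mem _ (Finset.mem_Iio.2 ?_)
    by_contra! hkj
    have h1 : (deg H (v j) : ℝ) ≤ deg H (v k) := by exact_mod_cast hmono k j hkj
    linarith [hB _ hx]
  have := (Finset.card_le_card hsub).trans Finset.card_image_le
  rw [Fin.card_Iio] at this
  omega

/-- A disconnected graph has a cut whose smaller side has at most half of the vertices. -/
lemma exists_cut {n : ℕ} (hn : 0 < n) {K : SimpleGraph (Fin n)} (hK : ¬ K.Connected) :
    ∃ A : Finset (Fin n), A.Nonempty ∧ 2 * A.card ≤ n ∧ ∀ x ∈ A, ∀ y ∈ Aᶜ, ¬ K.Adj x y := by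
  classical
  have : Nonempty (Fin n) := ⟨⟨0, hn⟩⟩
  have hpre : ¬ K.Preconnected := fun h => hK ⟨h⟩
  simp only [SimpleGraph.Preconnected, not_forall] at hpre
  obtain ⟨u, w, huw⟩ := hpre
  set A : Finset (Fin n) := Finset.univ.filter fun x => K.Reachable u x with hA
  have hcut : ∀ x ∈ A, ∀ y ∈ Aᶜ, ¬ K.Adj x y := by
    intro x hx y hy hxy
    simp only [hA, Finset.mem_compl, Finset.mem_filter, Finset.mem_univ, true_and] at hx hy
    exact hy (hx.trans hxy.reachable)
  have hc : A.card + Aᶜ.card = n := by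
    rw [Finset.card_add_card_compl, Fintype.card_fin]
  by_cases h : 2 * A.card ≤ n
  · exact ⟨A, ⟨u, by simp [hA]⟩, h, hcut⟩
  · refine ⟨Aᶜ, ⟨w, by simpa [hA] using huw⟩, by omega, fun x hx y hy hxy => ?_⟩
    rw [compl_compl] at hy
    exact hcut y hy x hx hxy.symm

/-- When `H` contains all edges of `G` between `A` and `B`, fewer than `δn` vertices of `A` have
`H`-degree below `(1 - δ)|B|p`: otherwise they would form a set violating the edge bound. -/
lemma card_low_lt {n : ℕ} {p δ : ℝ} {G H : SimpleGraph (Fin n)} {A B : Finset (Fin n)}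
    (h2 : ∀ X : Finset (Fin n), X ⊆ A → δ * n ≤ X.card →
      (1 - δ) * X.card * B.card * p ≤ crossEdges G X B)
    (hδn : 0 < δ * n)
    (hGH : ∀ x ∈ A, ∀ y ∈ B, G.Adj x y → H.Adj x y) :
    ((A.filter fun x => (deg H x : ℝ) < (1 - δ) * B.card * p).card : ℝ) < δ * n := by
  by_contra! hcon
  set X := A.filter fun x => (deg H x : ℝ) < (1 - δ) * B.card * p with hX
  have hXA : X ⊆ A := Finset.filter_subset _ _
  have hne : X.Nonempty := by
    rw [← Finset.card_pos]
    exact_mod_cast hδn.trans_le hcon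
  obtain ⟨x, hx, hd⟩ := exists_le_of_le_crossEdges (H := H) (d := (1 - δ) * B.card * p) hne
    (fun x hx y hy => hGH x (hXA hx) y hy) (le_of_eq_of_le (by ring) (h2 X hXA hcon))
  exact absurd (Finset.mem_filter.1 hx).2 (not_lt.2 hd)

/-- The deterministic part: enough edges across every cut `(A, Aᶜ)` and between every two disjoint
sets of at least `δn` vertices force `G \ H` to be connected. -/
lemma connected_of_crossEdges {n : ℕ} {p ε δ : ℝ} (hδ : 0 < δ) (hε : ε = 8 * δ) (hε1 : ε < 1)
    (hp : 0 < p) (hn : 1 < δ * n) {G H : SimpleGraph (Fin n)}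
    (h1 : ∀ A : Finset (Fin n), A.Nonempty → 2 * A.card ≤ n →
      (1 - δ) * A.card * Aᶜ.card * p ≤ crossEdges G A Aᶜ)
    (h2 : ∀ X Y : Finset (Fin n), Disjoint X Y → δ * n ≤ X.card → δ * n ≤ Y.card →
      (1 - δ) * X.card * Y.card * p ≤ crossEdges G X Y)
    (hH : ChvatalFamily n p ε ⌈ε * n⌉₊ H) : (G \ H).Connected := by
  classical
  have hnR : (8 : ℝ) < n := by nlinarith
  have hn8 : 8 < n := by exact_mod_cast hnR
  by_contra hK
  obtain ⟨A, hAne, hAn, hcut⟩ := exists_cut (by omega) hK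
  have hGH : ∀ x ∈ A, ∀ y ∈ Aᶜ, G.Adj x y → H.Adj x y := by
    intro x hx y hy hxy
    by_contra hH'
    exact hcut x hx y hy (by simp [SimpleGraph.sdiff_adj, hxy, hH'])
  obtain ⟨v, hv, hmono, hchv⟩ := hH
  have hc : A.card + Aᶜ.card = n := by
    rw [Finset.card_add_card_compl, Fintype.card_fin]
  have hcR : (A.card : ℝ) + Aᶜ.card = n := by exact_mod_cast hc
  have hAnR : 2 * (A.card : ℝ) ≤ n := by exact_mod_cast hAn
  have hA1 : 1 ≤ A.card := Finset.card_pos.2 hAne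
  by_cases hsmall : (A.card : ℝ) ≤ 2 * δ * n
  · -- A vertex of `A` has about `np` neighbours in `H`, more than the condition at `i = 1` allows.
    obtain ⟨x, hx, hd⟩ := exists_le_of_le_crossEdges (H := H) (d := (1 - δ) * Aᶜ.card * p) hAne
      hGH (le_of_eq_of_le (by ring) (h1 A hAne hAn))
    have hd0 : (1 - δ) * Aᶜ.card * p ≤ deg H (v ⟨0, by omega⟩) :=
      le_deg_of_card hv hmono (B := {x}) (by simpa using hd) (by simp)
    rcases hchv ⟨0, by omega⟩ (by norm_num; linarith) with h | h
    · have := hd0.trans h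
      have h3 : (1 - δ) * Aᶜ.card ≤ (n : ℝ) - 1 - ε * n := by
        refine le_of_mul_le_mul_right ?_ hp
        norm_num at this
        linarith
      have h4 : (Aᶜ.card : ℝ) ≥ (1 - 2 * δ) * n := by linarith
      subst hε
      nlinarith
    · have h0 : (0 : ℝ) ≤ ((0 : ℝ) + 1) * p - ε * n * p := by
        refine le_trans (Nat.cast_nonneg _) (h.trans_eq (by norm_num))
      subst hε
      nlinarith
  · push Not at hsmall
    -- All but fewer than `δn` vertices on each side have almost full degree across the cut.
    have hlowA := card_low_lt (p := p) (δ := δ) (G := G) (H := H) (A := A) (B := Aᶜ)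
      (fun X hX hXc => h2 X Aᶜ
        (Finset.disjoint_left.2 fun a ha ha' => Finset.mem_compl.1 ha' (hX ha)) hXc
        (by nlinarith)) (by linarith) hGH
    have hlowB := card_low_lt (p := p) (δ := δ) (G := G) (H := H) (A := Aᶜ) (B := A)
      (fun X hX hXc => h2 X A
        (Finset.disjoint_left.2 fun a ha ha' => Finset.mem_compl.1 (hX ha) ha') hXc
        (by nlinarith)) (by linarith) (fun x hx y hy hxy => (hGH y hy x hx hxy.symm).symm)
    set f := ⌊δ * n⌋₊ with hf
    have hf1 : 1 ≤ f := Nat.le_floor (by push_cast; linarith)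
    have hfle : (f : ℝ) ≤ δ * n := Nat.floor_le (by linarith)
    have hfA : 2 * f < A.card := by
      have : (2 * f : ℝ) < A.card := by linarith
      exact_mod_cast this
    have hs : 2 * f ≤ ⌈ε * n⌉₊ := by
      have : (2 * f : ℝ) ≤ (⌈ε * n⌉₊ : ℝ) := by
        refine le_trans ?_ (Nat.le_ceil _)
        subst hε
        nlinarith
      exact_mod_cast this
    have hgA : A.card - f ≤ (A.filter fun x => ¬ (deg H x : ℝ) < (1 - δ) * Aᶜ.card * p).card := by
      have := Nat.le_floor hlowA.le
      have := Finset.card_filter_add_card_filter_not (s := A)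
        (fun x => (deg H x : ℝ) < (1 - δ) * Aᶜ.card * p)
      omega
    have hgB : Aᶜ.card - f ≤
        (Aᶜ.filter fun x => ¬ (deg H x : ℝ) < (1 - δ) * A.card * p).card := by
      have := Nat.le_floor hlowB.le
      have := Finset.card_filter_add_card_filter_not (s := Aᶜ)
        (fun x => (deg H x : ℝ) < (1 - δ) * A.card * p)
      omega
    set gA := A.filter fun x => ¬ (deg H x : ℝ) < (1 - δ) * Aᶜ.card * p with hgAdef
    set gB := Aᶜ.filter fun x => ¬ (deg H x : ℝ) < (1 - δ) * A.card * p with hgBdef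
    have hdisj : Disjoint gA gB :=
      Finset.disjoint_left.2 fun a ha hb =>
        Finset.mem_compl.1 (Finset.mem_filter.1 hb).1 (Finset.mem_filter.1 ha).1
    have hle : (1 - δ) * A.card * p ≤ (1 - δ) * Aᶜ.card * p := by
      have h1δ : 0 ≤ 1 - δ := by linarith
      exact mul_le_mul_of_nonneg_right (mul_le_mul_of_nonneg_left (by linarith) h1δ) hp.le
    -- The condition is violated at the (one-based) index `|A| - ⌊δn⌋`.
    have hi : (((A.card - f - 1 : ℕ) : ℝ)) = A.card - f - 1 := by
      rw [Nat.cast_sub (by omega), Nat.cast_sub (by omega)]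
      simp
    have hf1R : (1 : ℝ) ≤ f := by exact_mod_cast hf1
    have hfgt : δ * n < f + 1 := Nat.lt_floor_add_one _
    rcases hchv ⟨A.card - f - 1, by omega⟩ (by simp only [hi]; linarith) with h | h
    · have hd := le_deg_of_card hv hmono (B := gA) (d := (1 - δ) * Aᶜ.card * p)
        (fun x hx => not_lt.1 (Finset.mem_filter.1 hx).2) (k := ⟨A.card - f - 1, by omega⟩)
        (by simp only; omega)
      have h3 := hd.trans h
      simp only [hi] at h3
      have h4 : (1 - δ) * Aᶜ.card ≤ (n : ℝ) - (A.card - f - 1 + 1) - ε * n := by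
        refine le_of_mul_le_mul_right ?_ hp
        linarith
      subst hε
      nlinarith
    · have hd := le_deg_of_card hv hmono (B := gA ∪ gB) (d := (1 - δ) * A.card * p)
        (fun x hx => by
          rcases Finset.mem_union.1 hx with hx | hx
          · exact hle.trans (not_lt.1 (Finset.mem_filter.1 hx).2)
          · exact not_lt.1 (Finset.mem_filter.1 hx).2)
        (k := ⟨n - (A.card - f - 1 + 1) - ⌈ε * n⌉₊ - 1, by omega⟩)
        (by rw [Finset.card_union_of_disjoint hdisj]; simp only; omega)
      have h3 := hd.trans h
      simp only [hi] at h3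
      have h4 : (1 - δ) * A.card ≤ ((A.card : ℝ) - f - 1 + 1) - ε * n := by
        refine le_of_mul_le_mul_right ?_ hp
        linarith
      subst hε
      nlinarith

/-! ### The union bounds -/

/-- Union bound over all cuts: the cut `(A, Aᶜ)` fails with probability at most `n ^ (-2 |A|)`, and
these terms sum to `(1 + n ^ (-2)) ^ n - 1` over nonempty `A`. -/
lemma Pr_bad_cut_le {n : ℕ} {p δ : ℝ} (hp : 0 ≤ p) (hp1 : p ≤ 1) (hδ : 0 < δ) (hδ1 : δ ≤ 1)
    (hn : 1 ≤ n) (hnp : 16 * Real.log n ≤ δ ^ 2 * (n * p)) :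
    Pr n p (fun G => ∃ A : Finset (Fin n), (A.Nonempty ∧ 2 * A.card ≤ n) ∧
      (crossEdges G A Aᶜ : ℝ) < (1 - δ) * A.card * Aᶜ.card * p) ≤ 2 / n := by
  classical
  have hn0 : (0 : ℝ) < n := by exact_mod_cast hn
  have hn1 : (1 : ℝ) ≤ n := by exact_mod_cast hn
  set y := exp (-(2 * Real.log n)) with hy
  have hy' : y = 1 / (n : ℝ) ^ 2 := by
    rw [hy, Real.exp_neg, two_mul, Real.exp_add, Real.exp_log hn0]
    field_simp
  set I : Finset (Finset (Fin n)) :=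
    Finset.univ.filter fun A => A.Nonempty ∧ 2 * A.card ≤ n with hI
  have hterm : ∀ A ∈ I, Pr n p (fun G => (crossEdges G A Aᶜ : ℝ) <
      (1 - δ) * A.card * Aᶜ.card * p) ≤ y ^ A.card := by
    intro A hA
    have hA2 := (Finset.mem_filter.1 hA).2.2
    refine (Pr_crossEdges_lt hp hp1 hδ.le hδ1 A Aᶜ disjoint_compl_right).trans ?_
    rw [hy, ← Real.exp_nat_mul, Real.exp_le_exp]
    have hc : (A.card : ℝ) + Aᶜ.card = n := by
      exact_mod_cast (by rw [Finset.card_add_card_compl, Fintype.card_fin] :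
        A.card + Aᶜ.card = n)
    have hA2' : 2 * (A.card : ℝ) ≤ n := by exact_mod_cast hA2
    have hkey : 2 * Real.log n ≤ δ ^ 2 * Aᶜ.card * p / 4 := by
      have : δ ^ 2 * p * (n / 2) ≤ δ ^ 2 * p * Aᶜ.card := by
        gcongr
        linarith
      linarith
    have := mul_le_mul_of_nonneg_left hkey (Nat.cast_nonneg (α := ℝ) A.card)
    linarith
  have hsum : ∑ A ∈ I, y ^ A.card ≤ (y + 1) ^ n - 1 := by
    have htot : ∑ A : Finset (Fin n), y ^ A.card = (y + 1) ^ n := by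
      simpa using Fintype.sum_pow_mul_eq_add_pow (Fin n) y 1
    have hsplit := Finset.add_sum_erase Finset.univ (fun A : Finset (Fin n) => y ^ A.card)
      (Finset.mem_univ ∅)
    have hle : ∑ A ∈ I, y ^ A.card ≤ ∑ A ∈ Finset.univ.erase (∅ : Finset (Fin n)), y ^ A.card := by
      refine Finset.sum_le_sum_of_subset_of_nonneg (fun A hA => ?_) fun _ _ _ => by positivity
      exact Finset.mem_erase.2 ⟨(Finset.mem_filter.1 hA).2.1.ne_empty, Finset.mem_univ _⟩
    simp only [Finset.card_empty, pow_zero] at hsplit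
    linarith
  have hexp : (y + 1) ^ n ≤ 1 + 2 / n := by
    have h1 : (y + 1) ^ n ≤ exp (1 / n) := by
      calc (y + 1) ^ n ≤ exp y ^ n := by
            gcongr
            exact Real.add_one_le_exp y
        _ = exp (1 / n) := by
            rw [← Real.exp_nat_mul, hy']
            congr 1
            field_simp
    have h0 : (0 : ℝ) ≤ 1 / n := by positivity
    have h01 : 1 / (n : ℝ) ≤ 1 := by rwa [div_le_one hn0]
    have h2 := (abs_le.1 (Real.abs_exp_sub_one_sub_id_le (x := 1 / (n : ℝ))
      (by rwa [abs_of_nonneg h0]))).2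
    have h3 : 2 / (n : ℝ) = 2 * (1 / n) := by ring
    nlinarith
  calc _ ≤ Pr n p (fun G => ∃ A ∈ I, (crossEdges G A Aᶜ : ℝ) <
        (1 - δ) * A.card * Aᶜ.card * p) := by
        refine Pr_mono hp hp1 fun G ⟨A, hA, hlt⟩ => ⟨A, ?_, hlt⟩
        exact Finset.mem_filter.2 ⟨Finset.mem_univ _, hA⟩
    _ ≤ ∑ A ∈ I, y ^ A.card := (Pr_exists_le hp hp1 I _).trans (Finset.sum_le_sum hterm)
    _ ≤ 2 / n := by linarith

/-- Union bound over the at most `4 ^ n` pairs of disjoint sets with at least `δn` elements. -/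
lemma Pr_bad_pair_le {n : ℕ} {p δ : ℝ} (hp : 0 ≤ p) (hp1 : p ≤ 1) (hδ : 0 < δ) (hδ1 : δ ≤ 1)
    (hn : 1 ≤ n) (hlog : 1 ≤ Real.log n) (hnp : 16 * Real.log n ≤ δ ^ 4 * (n * p)) :
    Pr n p (fun G => ∃ q : Finset (Fin n) × Finset (Fin n),
      (Disjoint q.1 q.2 ∧ δ * n ≤ q.1.card ∧ δ * n ≤ q.2.card) ∧
      (crossEdges G q.1 q.2 : ℝ) < (1 - δ) * q.1.card * q.2.card * p) ≤ 1 / n := by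
  classical
  have hn0 : (0 : ℝ) < n := by exact_mod_cast hn
  set I : Finset (Finset (Fin n) × Finset (Fin n)) := Finset.univ.filter fun q =>
    Disjoint q.1 q.2 ∧ δ * n ≤ q.1.card ∧ δ * n ≤ q.2.card with hI
  have hterm : ∀ q ∈ I, Pr n p (fun G => (crossEdges G q.1 q.2 : ℝ) <
      (1 - δ) * q.1.card * q.2.card * p) ≤ exp (-(4 * n)) := by
    intro q hq
    obtain ⟨hd, hX, hY⟩ := (Finset.mem_filter.1 hq).2
    refine (Pr_crossEdges_lt hp hp1 hδ.le hδ1 q.1 q.2 hd).trans ?_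
    rw [Real.exp_le_exp, neg_le_neg_iff]
    have h1 : (δ * n) * (δ * n) ≤ (q.1.card : ℝ) * q.2.card := by gcongr
    have h2 := mul_le_mul_of_nonneg_left h1 (by positivity : 0 ≤ δ ^ 2 * p)
    have h3 := mul_le_mul_of_nonneg_left hnp hn0.le
    have h4 := mul_le_mul_of_nonneg_left hlog hn0.le
    linarith
  have hcard : (I.card : ℝ) ≤ exp (2 * n) := by
    have h1 : I.card ≤ 2 ^ n * 2 ^ n := by
      refine (Finset.card_le_univ I).trans_eq ?_
      simp
    have h2 : (2 : ℝ) ≤ exp 1 := by linarith [Real.add_one_le_exp 1]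
    calc (I.card : ℝ) ≤ 2 ^ n * 2 ^ n := by exact_mod_cast h1
      _ ≤ exp 1 ^ n * exp 1 ^ n := by gcongr
      _ = exp (2 * n) := by
        rw [← Real.exp_nat_mul, ← Real.exp_add]
        congr 1
        ring
  calc _ ≤ Pr n p (fun G => ∃ q ∈ I, (crossEdges G q.1 q.2 : ℝ) <
        (1 - δ) * q.1.card * q.2.card * p) := by
        refine Pr_mono hp hp1 fun G ⟨q, hq, hlt⟩ => ⟨q, ?_, hlt⟩
        exact Finset.mem_filter.2 ⟨Finset.mem_univ _, hq⟩
    _ ≤ ∑ q ∈ I, exp (-(4 * n)) := (Pr_exists_le hp hp1 I _).trans (Finset.sum_le_sum hterm)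
    _ = I.card * exp (-(4 * n)) := by rw [Finset.sum_const, nsmul_eq_mul]
    _ ≤ exp (2 * n) * exp (-(4 * n)) := by gcongr
    _ = (exp (2 * n))⁻¹ := by
        rw [← Real.exp_add, ← Real.exp_neg]
        congr 1
        ring
    _ ≤ 1 / n := by
        rw [one_div]
        gcongr
        linarith [Real.add_one_le_exp (2 * (n : ℝ))]

/-- Proposition 2.5(iii).  For every `0 < ε < 1` there exists `C > 0`
such that, for `p ≥ C log n / n`, a.a.s. for every `H ∈ H^{ε,ε}_{n,p}(G)` the graph
`G ∖ H` is connected. -/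
theorem resilient_connected (ε : ℝ) (hε : 0 < ε) (hε1 : ε < 1) :
    ∃ C : ℝ, 0 < C ∧ ∀ η : ℝ, 0 < η → ∃ N : ℕ, ∀ n : ℕ, N ≤ n →
      ∀ p : ℝ, C * Real.log n / n ≤ p → p ≤ 1 →
        1 - η ≤ Pr n p (fun G =>
          ∀ H : SimpleGraph (Fin n), H ≤ G → ChvatalFamily n p ε ⌈ε * n⌉₊ H →
            (G \ H).Connected) := by
  set δ := ε / 8 with hδdef
  have hδ : 0 < δ := by positivity
  have hδ1 : δ ≤ 1 := by linarith
  refine ⟨16 / δ ^ 4, by positivity, fun η hη => ?_⟩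
  refine ⟨⌈1 / δ + exp 1 + 3 / η⌉₊ + 1, fun n hn p hCp hp1 => ?_⟩
  have hnbig : 1 / δ + exp 1 + 3 / η < n :=
    (Nat.le_ceil _).trans_lt (by exact_mod_cast hn)
  have hδ' : 0 < 1 / δ := by positivity
  have hη' : 0 < 3 / η := by positivity
  have he := Real.exp_pos 1
  have hn1 : 1 ≤ n := by omega
  have hn0 : (0 : ℝ) < n := by exact_mod_cast hn1
  have hlog : 1 ≤ Real.log n := (Real.le_log_iff_exp_le hn0).2 (by linarith)
  have hp : 0 < p := lt_of_lt_of_le (by positivity) hCp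
  have hδn : 1 < δ * n := by
    rw [← div_lt_iff₀' hδ]
    linarith
  have hηn : 3 / (n : ℝ) ≤ η := by
    rw [div_le_iff₀ hn0, ← div_le_iff₀' hη]
    linarith
  have hnp4 : 16 * Real.log n ≤ δ ^ 4 * (n * p) := by
    rw [div_le_iff₀ hn0, div_mul_eq_mul_div, div_le_iff₀ (by positivity)] at hCp
    linarith
  have hnp2 : 16 * Real.log n ≤ δ ^ 2 * (n * p) := by
    refine hnp4.trans ?_
    have : δ ^ 4 ≤ δ ^ 2 := pow_le_pow_of_le_one hδ.le hδ1 (by norm_num)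
    gcongr
  have hcut := Pr_bad_cut_le hp.le hp1 hδ hδ1 hn1 hnp2
  have hpair := Pr_bad_pair_le hp.le hp1 hδ hδ1 hn1 hlog hnp4
  have hor := (Pr_or_le hp.le hp1 _ _).trans (add_le_add hcut hpair)
  have h3 : 2 / (n : ℝ) + 1 / n = 3 / n := by ring
  rw [← Pr_add_Pr_not n p (fun G => ∀ H : SimpleGraph (Fin n), H ≤ G →
    ChvatalFamily n p ε ⌈ε * n⌉₊ H → (G \ H).Connected)]
  refine sub_le_iff_le_add.2 (add_le_add_right (le_trans (Pr_mono hp.le hp1 fun G hG => ?_)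
    (hor.trans (h3.le.trans hηn))) _)
  by_contra! hgood
  refine hG fun H _ hH => connected_of_crossEdges hδ (by rw [hδdef]; ring) hε1 hp hδn
    (fun A hA hA2 => hgood.1 A ⟨hA, hA2⟩) (fun X Y hd hX hY => hgood.2 (X, Y) ⟨hd, hX, hY⟩) hH

end Resilience
end

section
/- Let G be a graph, let P' be a path on V(G), and let P = v_1…v_ℓ be a longest path in the graph G ∪ P'. Then for every integer t ≥ 0 we have |R^{t+1}_{G,P,v_ℓ}| ≥ (1/2)( |N_G(R^t_{G,P,v_ℓ})| − 3|R^t_{G,P,v_ℓ}| ). -/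
/-!
Write `R_t` for `Rset G P t`.  The bound follows from the inclusion
`N_G(R_t) ⊆ R_t ∪ N_P(R_t) ∪ N_P(R_{t+1})` (`nbhd_subset`), because every vertex has at most two
neighbours on the path `P` (`ncard_nbhd_listGraph_le`), so the right-hand side has at most
`3 |R_t| + 2 |R_{t+1}|` elements.

For the inclusion, every path obtained by at most `t` rotations is again a longest path with the
vertices and the last vertex of `P`, and it contains each edge of `P` that avoids `R_t`: when an
edge `cb` is broken, `c` becomes an endpoint (`RotInv`, `rotInv_of_mem`).  Let `v ∉ R_t` be adjacent
to an endpoint `x` of such a path `l` and suppose that `v` has no `P`-neighbour in `R_t`.  By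
maximality `v` lies on `l`, and all `P`-edges at `v` survive in `l`.  Comparing the two paths
locally at `v`, the predecessor `c` of `v` on `l` is a `P`-neighbour of `v`
(`pred_adj_of_preserved`).  Hence the rotation with pivot `v` is allowed and its new endpoint `c`
lies in `R_{t+1}`.
-/


open Filter Real

namespace Resilience

variable {V : Type*}

/-! ### Consecutive pairs of a list -/

/-- `b` immediately follows `a` in the list `l`. -/
def Link (l : List V) (a b : V) : Prop := (a, b) ∈ l.zip l.tail

lemma link_cons (x : V) (l : List V) (a b : V) :
    Link (x :: l) a b ↔ (x = a ∧ l.head? = some b) ∨ Link l a b := by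
  cases l with
  | nil => simp [Link]
  | cons y l => simp [Link, eq_comm]

lemma link_append (A B : List V) (a b : V) :
    Link (A ++ B) a b ↔
      Link A a b ∨ Link B a b ∨ (A.getLast? = some a ∧ B.head? = some b) := by
  induction A with
  | nil => simp [Link]
  | cons x A ih =>
    rw [List.cons_append, link_cons, link_cons, ih]
    cases A with
    | nil => simp [Link]; tauto
    | cons y A => simp [List.getLast?_cons_cons]; tauto

lemma link_reverse (l : List V) (a b : V) : Link l.reverse a b ↔ Link l b a := by
  induction l with
  | nil => simp [Link]
  | cons x l ih =>
    have h0 : ¬ Link [x] a b := by simp [Link]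
    rw [List.reverse_cons, link_append, link_cons x l, ih, List.getLast?_reverse, List.head?_cons,
      Option.some.injEq]
    tauto

lemma listGraph_adj (l : List V) (a b : V) :
    (listGraph l).Adj a b ↔ a ≠ b ∧ (Link l a b ∨ Link l b a) := by
  simp only [listGraph, SimpleGraph.fromEdgeSet_adj, Set.mem_ofPred_eq, Link, Prod.exists,
    Sym2.eq_iff]
  constructor
  · rintro ⟨⟨c, d, h, ⟨rfl, rfl⟩ | ⟨rfl, rfl⟩⟩, hne⟩
    · exact ⟨hne, Or.inl h⟩
    · exact ⟨hne, Or.inr h⟩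
  · rintro ⟨hne, h | h⟩
    · exact ⟨⟨_, _, h, by simp⟩, hne⟩
    · exact ⟨⟨_, _, h, by simp⟩, hne⟩

lemma Link.mem {l : List V} {a b : V} (h : Link l a b) : a ∈ l ∧ b ∈ l :=
  ⟨(List.of_mem_zip h).1, List.mem_of_mem_tail (List.of_mem_zip h).2⟩

lemma Link.right_unique {l : List V} (hl : l.Nodup) {a b b' : V} (h : Link l a b)
    (h' : Link l a b') : b = b' := by
  induction l with
  | nil => simp [Link] at h
  | cons x l ih =>
    rw [link_cons] at h h'
    have hx := (List.nodup_cons.1 hl).1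
    rcases h with ⟨rfl, h⟩ | h <;> rcases h' with ⟨hh, h'⟩ | h'
    · simpa [h] using h'
    · exact absurd h'.mem.1 hx
    · exact absurd (hh ▸ h.mem.1) hx
    · exact ih (List.nodup_cons.1 hl).2 h h'

lemma Link.left_unique {l : List V} (hl : l.Nodup) {a a' b : V} (h : Link l a b)
    (h' : Link l a' b) : a = a' :=
  Link.right_unique (List.nodup_reverse.2 hl) ((link_reverse l b a).2 h)
    ((link_reverse l b a').2 h')

lemma Link.ne {l : List V} (hl : l.Nodup) {a b : V} (h : Link l a b) : a ≠ b := by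
  induction l with
  | nil => simp [Link] at h
  | cons x l ih =>
    rw [link_cons] at h
    rcases h with ⟨rfl, h⟩ | h
    · rintro rfl
      exact (List.nodup_cons.1 hl).1 (List.mem_of_head? h)
    · exact ih (List.nodup_cons.1 hl).2 h

lemma chain_of_link {G : SimpleGraph V} {l : List V} (h : ∀ a b, Link l a b → G.Adj a b) :
    l.IsChain G.Adj := by
  induction l with
  | nil => exact List.isChain_nil
  | cons x l ih =>
    refine List.isChain_cons.2 ⟨fun y hy => h x y ?_, ih fun a b hab => h a b ?_⟩
    · exact (link_cons ..).2 (Or.inl ⟨rfl, hy⟩)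
    · exact (link_cons ..).2 (Or.inr hab)

lemma Link.adj {G : SimpleGraph V} {l : List V} (hl : l.IsChain G.Adj) {a b : V}
    (h : Link l a b) : G.Adj a b := by
  induction l with
  | nil => simp [Link] at h
  | cons x l ih =>
    obtain ⟨h1, h2⟩ := List.isChain_cons.1 hl
    rcases (link_cons ..).1 h with ⟨rfl, hh⟩ | h
    · exact h1 _ hh
    · exact ih h2 h

/-- Every element other than the head has a predecessor. -/
lemma exists_pred {l : List V} {v : V} (hv : v ∈ l) (hh : l.head? ≠ some v) :
    ∃ c, Link l c v := by
  induction l with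
  | nil => simp at hv
  | cons x l ih =>
    have hvl : v ∈ l := by
      rcases List.mem_cons.1 hv with rfl | h
      · simp at hh
      · exact h
    by_cases h : l.head? = some v
    · exact ⟨x, (link_cons ..).2 (Or.inl ⟨rfl, h⟩)⟩
    · obtain ⟨c, hc⟩ := ih hvl h
      exact ⟨c, (link_cons ..).2 (Or.inr hc)⟩

lemma exists_succ {l : List V} {v : V} (hv : v ∈ l) (hh : l.getLast? ≠ some v) :
    ∃ c, Link l v c := by
  obtain ⟨c, hc⟩ := exists_pred (List.mem_reverse.2 hv) (by rwa [List.head?_reverse])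
  exact ⟨c, (link_reverse ..).1 hc⟩

lemma not_link_getLast {l : List V} (hl : l.Nodup) {v w : V} (hv : l.getLast? = some v) :
    ¬ Link l v w := by
  induction l with
  | nil => simp at hv
  | cons x l ih =>
    intro h
    have hx := (List.nodup_cons.1 hl).1
    cases l with
    | nil => simp [Link] at h
    | cons y l =>
      rw [List.getLast?_cons_cons] at hv
      rcases (link_cons ..).1 h with ⟨rfl, -⟩ | h
      · exact hx (List.mem_of_getLast? hv)
      · exact ih (List.nodup_cons.1 hl).2 hv h

lemma Link.exists_eq {l : List V} {c v : V} (h : Link l c v) :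
    ∃ s u, l = s ++ c :: v :: u := by
  induction l with
  | nil => simp [Link] at h
  | cons x l ih =>
    rcases (link_cons ..).1 h with ⟨rfl, hh⟩ | h
    · obtain ⟨u, rfl⟩ := List.head?_eq_some_iff.1 hh
      exact ⟨[], u, rfl⟩
    · obtain ⟨s, u, rfl⟩ := ih h
      exact ⟨x :: s, u, rfl⟩

/-! ### Neighbourhoods along a path -/

lemma ncard_rel_le [Fintype V] (X : Set V) (r : V → V → Prop)
    (hr : ∀ x v v', r x v → r x v' → v = v') :
    {v | ∃ x ∈ X, r x v}.ncard ≤ X.ncard := by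
  classical
  choose! f hf using fun (v : V) (hv : v ∈ {v | ∃ x ∈ X, r x v}) => hv
  refine Set.ncard_le_ncard_of_injOn f (fun v hv => (hf v hv).1) ?_ (Set.toFinite _)
  intro v hv w hw hvw
  exact hr (f v) v w (hf v hv).2 (hvw ▸ (hf w hw).2)

lemma ncard_nbhd_listGraph_le [Fintype V] {P : List V} (hP : P.Nodup) (X : Set V) :
    (nbhd (listGraph P) X).ncard ≤ 2 * X.ncard := by
  have hsub : nbhd (listGraph P) X ⊆
      {v | ∃ x ∈ X, Link P x v} ∪ {v | ∃ x ∈ X, Link P v x} := by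
    rintro v ⟨x, hx, h⟩
    rcases ((listGraph_adj ..).1 h).2 with h | h
    · exact Or.inr ⟨x, hx, h⟩
    · exact Or.inl ⟨x, hx, h⟩
  have h1 := ncard_rel_le X (fun x v => Link P x v) fun x v v' h h' => h.right_unique hP h'
  have h2 := ncard_rel_le X (fun x v => Link P v x) fun x v v' h h' => h.left_unique hP h'
  have h3 := Set.ncard_le_ncard hsub (Set.toFinite _)
  have h4 := Set.ncard_union_le {v | ∃ x ∈ X, Link P x v} {v | ∃ x ∈ X, Link P v x}
  omega

/-- If `l` has the vertices and the last vertex of `P`, and every `P`-edge at `v` is also an edge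
of `l`, then the predecessor of `v` on `l` is a `P`-neighbour of `v`.  Indeed `v` heads neither
path and is last on both or on neither, so it has equally many neighbours on `P` and on `l`. -/
lemma pred_adj_of_preserved {P l : List V} (hP : P.Nodup) (hl : l.Nodup)
    (hvP : ∀ {v}, v ∈ l → v ∈ P)
    (hlast : l.getLast? = P.getLast?) {v c : V} (hh : P.head? ≠ some v)
    (hkeep : ∀ w, (listGraph P).Adj w v → (listGraph l).Adj w v) (hc : Link l c v) :
    (listGraph P).Adj c v := by
  obtain ⟨p, hp⟩ := exists_pred (hvP hc.mem.2) hh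
  have hpv : (listGraph P).Adj p v := (listGraph_adj ..).2 ⟨hp.ne hP, Or.inl hp⟩
  rcases ((listGraph_adj ..).1 (hkeep p hpv)).2 with h | h
  · exact hc.left_unique hl h ▸ hpv
  -- The `P`-predecessor of `v` follows `v` on `l`, so the `P`-successor has to precede it.
  have hne : P.getLast? ≠ some v := fun hv => not_link_getLast hl (hlast.trans hv) h
  obtain ⟨q, hq⟩ := exists_succ hp.mem.2 hne
  have hqv : (listGraph P).Adj q v := (listGraph_adj ..).2 ⟨(hq.ne hP).symm, Or.inr hq⟩
  rcases ((listGraph_adj ..).1 (hkeep q hqv)).2 with h' | h'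
  · exact hc.left_unique hl h' ▸ hqv
  · exfalso
    -- Otherwise `P` would contain `p v p`.
    obtain rfl := h.right_unique hl h'
    obtain ⟨s, u, rfl⟩ := hp.exists_eq
    have h1 : Link (s ++ [p] ++ v :: u) v p := by simpa using hq
    have hn : (s ++ [p] ++ v :: u).Nodup := by simpa using hP
    have hpu : p ∉ v :: u := fun hm => List.disjoint_of_nodup_append hn (by simp) hm
    have hvs : v ∉ s ++ [p] := fun hm => List.disjoint_of_nodup_append hn hm (by simp)
    rcases (link_append ..).1 h1 with h | h | ⟨h, -⟩
    · exact hvs h.mem.1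
    · exact hpu h.mem.2
    · exact hvs (List.mem_of_getLast? h)

/-! ### Paths obtained by rotations -/

lemma rotSet_mono_succ (G : SimpleGraph V) (P : List V) (t : ℕ) :
    rotSet G P t ⊆ rotSet G P (t + 1) := fun _ h => Or.inl h

lemma Rset_mono_succ (G : SimpleGraph V) (P : List V) (t : ℕ) :
    Rset G P t ⊆ Rset G P (t + 1) := fun _ ⟨l, hl, h⟩ => ⟨l, rotSet_mono_succ G P t hl, h⟩

lemma mem_rotSet_self (G : SimpleGraph V) (P : List V) (t : ℕ) : P ∈ rotSet G P t := by
  induction t with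
  | zero => rfl
  | succ t ih => exact rotSet_mono_succ G P t ih

/-- What rotations preserve: `l` is a rearrangement of `P` with the same last vertex, its edges lie
in `H`, and it contains every edge of `P` that avoids the set `R` of endpoints. -/
structure RotInv (H : SimpleGraph V) (P : List V) (R : Set V) (l : List V) : Prop where
  perm : l.Perm P
  last : l.getLast? = P.getLast?
  adj : ∀ a b, Link l a b → H.Adj a b
  keep : ∀ a b, (listGraph P).Adj a b → a ∉ R → b ∉ R → (listGraph l).Adj a b

lemma rotInv_of_mem {G H : SimpleGraph V} {P : List V} (hGH : G ≤ H) (hc : P.IsChain H.Adj)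
    (t : ℕ) : ∀ l ∈ rotSet G P t, RotInv H P (Rset G P t) l := by
  induction t with
  | zero =>
    rintro l rfl
    exact ⟨List.Perm.refl _, rfl, fun a b h => h.adj hc, fun a b h _ _ => h⟩
  | succ t ih =>
    rintro l' (hl' | ⟨l, hl, hrot⟩)
    · obtain ⟨h1, h2, h3, h4⟩ := ih l' hl'
      exact ⟨h1, h2, h3, fun a b hab ha hb => h4 a b hab (fun h => ha (Rset_mono_succ G P t h))
        (fun h => hb (Rset_mono_succ G P t h))⟩
    · have hmem : l' ∈ rotSet G P (t + 1) := Or.inr ⟨l, hl, hrot⟩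
      obtain ⟨h1, h2, h3, h4⟩ := ih l hl
      obtain ⟨a, c, b, t₁, t₂, rfl, hab, hcb, rfl⟩ := hrot
      have hcR : c ∈ Rset G P (t + 1) := ⟨_, hmem, by simp⟩
      have heq : a :: t₁ ++ c :: b :: t₂ = (a :: t₁ ++ [c]) ++ b :: t₂ := by simp
      rw [heq] at h1 h2 h3 h4
      refine ⟨((List.reverse_perm _).append_right _).trans h1, ?_, ?_, ?_⟩
      · rw [← h2, List.getLast?_append, List.getLast?_append]
        simp [List.getLast?_cons]
      · intro x y hxy
        rcases (link_append ..).1 hxy with h | h | ⟨hx, hy⟩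
        · exact (h3 y x ((link_append ..).2 (Or.inl ((link_reverse ..).1 h)))).symm
        · exact h3 x y ((link_append ..).2 (Or.inr (Or.inl h)))
        · rw [List.getLast?_reverse] at hx
          simp only [List.cons_append, List.head?_cons, Option.some.injEq] at hx hy
          subst hx hy
          exact hGH hab
      · -- The only edge lost is `cb`, and `c` is now an endpoint.
        have key : ∀ x y, Link ((a :: t₁ ++ [c]) ++ b :: t₂) x y → x ∉ Rset G P (t + 1) →
            Link ((a :: t₁ ++ [c]).reverse ++ b :: t₂) y x ∨
            Link ((a :: t₁ ++ [c]).reverse ++ b :: t₂) x y := by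
          intro x y h hx
          rcases (link_append ..).1 h with h | h | ⟨h, -⟩
          · exact Or.inl ((link_append ..).2 (Or.inl ((link_reverse ..).2 h)))
          · exact Or.inr ((link_append ..).2 (Or.inr (Or.inl h)))
          · rw [List.getLast?_concat, Option.some.injEq] at h
            exact absurd (h ▸ hcR) hx
        intro x y hxy hx hy
        have hxy' := (listGraph_adj ..).1 (h4 x y hxy (fun h => hx (Rset_mono_succ G P t h))
          (fun h => hy (Rset_mono_succ G P t h)))
        refine (listGraph_adj ..).2 ⟨hxy'.1, ?_⟩
        rcases hxy'.2 with h | h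
        · exact (key x y h hx).symm
        · exact key y x h hy

lemma nbhd_subset {G H : SimpleGraph V} {P : List V} (hGH : G ≤ H) (hP : IsLongestPathOn H P)
    (t : ℕ) :
    nbhd G (Rset G P t) ⊆ Rset G P t ∪ nbhd (listGraph P) (Rset G P t) ∪
      nbhd (listGraph P) (Rset G P (t + 1)) := by
  rintro v ⟨x, ⟨l, hl, hx⟩, hvx⟩
  by_contra hcon
  simp only [Set.mem_union, not_or] at hcon
  obtain ⟨⟨hvR, hvN⟩, hvN'⟩ := hcon
  obtain ⟨⟨-, hPn, hPc⟩, hmax⟩ := hP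
  obtain ⟨hperm, hlast, hadj, hkeep⟩ := rotInv_of_mem hGH hPc t l hl
  have hln : l.Nodup := hperm.nodup_iff.2 hPn
  have hxR : x ∈ Rset G P t := ⟨l, hl, hx⟩
  -- Otherwise `v :: l` would be a longer path.
  have hvl : v ∈ l := by
    by_contra hvl
    have hpath : IsPathOn H (v :: l) := by
      refine ⟨by simp, List.nodup_cons.2 ⟨hvl, hln⟩, chain_of_link fun a b hab => ?_⟩
      rcases (link_cons ..).1 hab with ⟨rfl, h⟩ | h
      · obtain rfl : x = b := by simpa [hx] using h
        exact hGH hvx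
      · exact hadj a b h
    have := hmax _ hpath
    rw [List.length_cons, hperm.length_eq] at this
    omega
  have hhead : l.head? ≠ some v := fun h => hvR ⟨l, hl, h⟩
  have hheadP : P.head? ≠ some v := fun h => hvR ⟨P, mem_rotSet_self G P t, h⟩
  have hNR : ∀ w, (listGraph P).Adj w v → w ∉ Rset G P t :=
    fun w hw hwR => hvN ⟨w, hwR, hw.symm⟩
  obtain ⟨c, hc⟩ := exists_pred hvl hhead
  have hcv : (listGraph P).Adj c v :=
    pred_adj_of_preserved hPn hln hperm.mem_iff.1 hlast hheadP
      (fun w hw => hkeep w v hw (hNR w hw) hvR) hc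
  obtain ⟨s, u, rfl⟩ := hc.exists_eq
  cases s with
  | nil =>
    -- Here `v` is the second vertex of `l`, so that `c = x`.
    obtain rfl : c = x := by simpa using hx
    exact hNR c hcv hxR
  | cons a s =>
    obtain rfl : a = x := by simpa using hx
    refine hvN' ⟨c, ⟨(a :: s ++ [c]).reverse ++ v :: u, Or.inr ⟨_, hl, ?_⟩, by simp⟩, hcv.symm⟩
    exact ⟨a, c, v, s, u, rfl, hvx.symm, hcv, rfl⟩

/-- Lemma 4.1.  Let `G` be a graph, `P'` a path on `V(G)`, and `P` a
longest path in `G ∪ P'`.  Then for every `t ≥ 0` we have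
`|R^{t+1}_{G,P,v_ℓ}| ≥ (1/2)(|N_G(R^t_{G,P,v_ℓ})| − 3|R^t_{G,P,v_ℓ}|)`. -/
theorem rotation_endpoint_bound {V : Type*} [Fintype V] (G : SimpleGraph V)
    (P' P : List V) (hP' : P'.Nodup)
    (hP : IsLongestPathOn (G ⊔ listGraph P') P) (t : ℕ) :
    (1/2 : ℝ) * (((nbhd G (Rset G P t)).ncard : ℝ) - 3 * ((Rset G P t).ncard : ℝ))
      ≤ ((Rset G P (t + 1)).ncard : ℝ) := by
  have h1 := Set.ncard_le_ncard (nbhd_subset le_sup_left hP t) (Set.toFinite _)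
  have h2 := Set.ncard_union_le (Rset G P t ∪ nbhd (listGraph P) (Rset G P t))
    (nbhd (listGraph P) (Rset G P (t + 1)))
  have h3 := Set.ncard_union_le (Rset G P t) (nbhd (listGraph P) (Rset G P t))
  have h4 := ncard_nbhd_listGraph_le hP.1.2.1 (Rset G P t)
  have h5 := ncard_nbhd_listGraph_le hP.1.2.1 (Rset G P (t + 1))
  have h6 : (nbhd G (Rset G P t)).ncard ≤
      3 * (Rset G P t).ncard + 2 * (Rset G P (t + 1)).ncard := by omega
  have h7 : ((nbhd G (Rset G P t)).ncard : ℝ) ≤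
      3 * ((Rset G P t).ncard : ℝ) + 2 * ((Rset G P (t + 1)).ncard : ℝ) := by exact_mod_cast h6
  linarith

end Resilience
end
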